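/- arXiv:1503.03634 — 6 statements merged into one kernel-verified Lean document; each statement's English description precedes it below -/
import Mathlib

section
/- For all integers n₁, n₂, n₃ ≥ 1, the integral c(n₁,n₂,n₃) := (2/π) ∫₀^π sin(n₁θ) sin(n₂θ) sin(n₃θ)/sin(θ) dθ equals 1 if condition (∗∗) holds, and equals 0 otherwise, where (∗∗) is: all three of n₁+n₂−n₃, n₂+n₃−n₁, n₃+n₁−n₂ are positive and n₁+n₂+n₃ is odd. -/
open Real

open Polynomial.Chebyshev in
lemma intervalIntegrable_chebyshevU_cos (k : ℤ) (a b : ℝ) :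
    IntervalIntegrable (fun θ : ℝ => (U ℝ k).eval (cos θ)) MeasureTheory.volume a b :=
  ((U ℝ k).continuous.comp continuous_cos).intervalIntegrable a b

open Polynomial.Chebyshev in
lemma integral_chebyshevU_natCast_sub_one_cos (n : ℕ) :
    ∫ θ in (0 : ℝ)..π, (U ℝ ((n : ℤ) - 1)).eval (cos θ) = if Odd n then π else 0 := by
  induction n using Nat.twoStepInduction with
  | zero => simp
  | one => simp
  | more n ih _ =>
    have hcos : ∫ θ in (0 : ℝ)..π, 2 * cos (((n : ℝ) + 1) * θ) = 0 := by
      have hn : (n : ℝ) + 1 ≠ 0 := by positivity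
      have hsin : sin (((n : ℝ) + 1) * π) = 0 := by
        exact_mod_cast sin_nat_mul_pi (n + 1)
      rw [intervalIntegral.integral_const_mul,
        intervalIntegral.integral_comp_mul_left _ hn, integral_cos, hsin]
      simp
    have hrec (θ : ℝ) : (U ℝ (((n + 2 : ℕ) : ℤ) - 1)).eval (cos θ) =
        (U ℝ ((n : ℤ) - 1)).eval (cos θ) + 2 * cos (((n : ℝ) + 1) * θ) := by
      have hindex : ((n + 2 : ℕ) : ℤ) - 1 = (n : ℤ) - 1 + 2 := by push_cast; ring
      rw [hindex, U_eq_two_mul_T_add_U, Polynomial.eval_add, Polynomial.eval_mul, T_real_cos]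
      push_cast
      rw [Polynomial.eval_ofNat]
      ring_nf
    simp_rw [hrec]
    rw [intervalIntegral.integral_add (intervalIntegrable_chebyshevU_cos _ _ _)
      (Continuous.intervalIntegrable (by fun_prop) 0 π), ih, hcos, add_zero]
    simp [Nat.odd_add]

open Polynomial.Chebyshev in
lemma integral_chebyshevU_sub_one_cos (k : ℤ) :
    ∫ θ in (0 : ℝ)..π, (U ℝ (k - 1)).eval (cos θ) = if Odd k then k.sign * π else 0 := by
  have hnat (n : ℕ) : ∫ θ in (0 : ℝ)..π, (U ℝ ((n : ℤ) - 1)).eval (cos θ) =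
      if Odd (n : ℤ) then (n : ℤ).sign * π else 0 := by
    rw [integral_chebyshevU_natCast_sub_one_cos]
    rcases n.eq_zero_or_pos with rfl | hn
    · simp
    · simp [Int.sign_eq_one_of_pos (Int.natCast_pos.mpr hn)]
  obtain ⟨n, rfl | rfl⟩ := k.eq_nat_or_neg
  · exact hnat n
  · simp_rw [U_neg_sub_one, Polynomial.eval_neg]
    rw [intervalIntegral.integral_neg, hnat, Int.sign_neg]
    simp only [odd_neg]
    split_ifs <;> simp

lemma four_mul_sin_mul_sin_mul_sin (x y z : ℝ) :
    4 * (sin x * sin y * sin z) =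
      sin (x + y - z) + sin (y + z - x) + sin (z + x - y) - sin (x + y + z) := by
  simp only [sin_add, sin_sub, cos_add]
  ring

open Polynomial.Chebyshev in
lemma sin_mul_sin_mul_sin_div_sin (a b c : ℤ) {θ : ℝ} (hθ : sin θ ≠ 0) :
    sin (a * θ) * sin (b * θ) * sin (c * θ) / sin θ =
      ((U ℝ (a + b - c - 1)).eval (cos θ) + (U ℝ (b + c - a - 1)).eval (cos θ)
        + (U ℝ (c + a - b - 1)).eval (cos θ) - (U ℝ (a + b + c - 1)).eval (cos θ)) / 4 := by
  have hU (k : ℤ) : (U ℝ (k - 1)).eval (cos θ) * sin θ = sin (k * θ) := by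
    simp [U_real_cos]
  have hprod := four_mul_sin_mul_sin_mul_sin (a * θ) (b * θ) (c * θ)
  simp only [← add_mul, ← sub_mul] at hprod
  rw [div_eq_iff hθ]
  have h₁ := hU (a + b - c)
  have h₂ := hU (b + c - a)
  have h₃ := hU (c + a - b)
  have h₄ := hU (a + b + c)
  push_cast at h₁ h₂ h₃ h₄
  linear_combination (hprod - h₁ - h₂ - h₃ + h₄) / 4

lemma integral_sin_mul_sin_mul_sin_div_sin (a b c : ℤ) :
    ∫ θ in (0 : ℝ)..π, sin (a * θ) * sin (b * θ) * sin (c * θ) / sin θ =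
      if Odd (a + b + c) then
        ((a + b - c).sign + (b + c - a).sign + (c + a - b).sign - (a + b + c).sign : ℤ) * π / 4
      else 0 := by
  have hcongr := intervalIntegral.integral_congr_uIoo (μ := MeasureTheory.volume)
    (a := 0) (b := π) fun θ hθ =>
      sin_mul_sin_mul_sin_div_sin a b c
        (sin_pos_of_mem_Ioo (Set.uIoo_of_le pi_pos.le ▸ hθ)).ne'
  have hint (k : ℤ) := intervalIntegrable_chebyshevU_cos k 0 π
  rw [hcongr, intervalIntegral.integral_div,
    intervalIntegral.integral_sub (((hint _).add (hint _)).add (hint _)) (hint _),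
    intervalIntegral.integral_add ((hint _).add (hint _)) (hint _),
    intervalIntegral.integral_add (hint _) (hint _)]
  simp only [integral_chebyshevU_sub_one_cos]
  have h₁ : Odd (a + b - c) ↔ Odd (a + b + c) := by grind
  have h₂ : Odd (b + c - a) ↔ Odd (a + b + c) := by grind
  have h₃ : Odd (c + a - b) ↔ Odd (a + b + c) := by grind
  simp only [h₁, h₂, h₃]
  split_ifs
  · push_cast
    ring
  · simp

/-- For positive integers `n₁, n₂, n₃`,
`c(n₁,n₂,n₃) := (2/π) ∫₀^π sin(n₁θ)sin(n₂θ)sin(n₃θ)/sin(θ) dθ` equals `1` if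
condition (∗∗) holds (all of `n₁+n₂−n₃`, `n₂+n₃−n₁`, `n₃+n₁−n₂` are positive
and `n₁+n₂+n₃` is odd), and `0` otherwise. -/
theorem c_eq_indicator (n₁ n₂ n₃ : ℕ) (h₁ : 1 ≤ n₁) (h₂ : 1 ≤ n₂) (h₃ : 1 ≤ n₃) :
    (2 / π) * ∫ θ in (0:ℝ)..π,
        Real.sin ((n₁ : ℝ) * θ) * Real.sin ((n₂ : ℝ) * θ) * Real.sin ((n₃ : ℝ) * θ)
          / Real.sin θ
      = if n₃ < n₁ + n₂ ∧ n₁ < n₂ + n₃ ∧ n₂ < n₃ + n₁ ∧ Odd (n₁ + n₂ + n₃)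
        then 1 else 0 := by
  have hintegral := integral_sin_mul_sin_mul_sin_div_sin n₁ n₂ n₃
  simp only [Int.cast_natCast] at hintegral
  rw [hintegral]
  have hparity : Odd ((n₁ : ℤ) + n₂ + n₃) ↔ Odd (n₁ + n₂ + n₃) := by
    exact_mod_cast Int.odd_coe_nat (n₁ + n₂ + n₃)
  simp only [hparity]
  by_cases hodd : Odd (n₁ + n₂ + n₃)
  · have hsign : ((n₁ : ℤ) + n₂ - n₃).sign + ((n₂ : ℤ) + n₃ - n₁).sign
        + ((n₃ : ℤ) + n₁ - n₂).sign - ((n₁ : ℤ) + n₂ + n₃).sign =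
        if n₃ < n₁ + n₂ ∧ n₁ < n₂ + n₃ ∧ n₂ < n₃ + n₁ then 2 else 0 := by
      obtain ⟨m, hm⟩ := hodd
      grind [Int.sign_eq_one_of_pos, Int.sign_eq_neg_one_of_neg]
    rw [if_pos hodd, hsign]
    simp only [hodd, and_true]
    split_ifs
    · push_cast
      field_simp
      norm_num
    · simp
  · simp [hodd]
end

section
/- For every complex number s with Re(s) > 0, the series ∑ over triples (n₁,n₂,n₃) of positive integers satisfying condition (∗∗) of (n₁n₂n₃)^{−(s+1)} converges absolutely and equals the (absolutely convergent) series ∑_{m₁,m₂,m₃ ≥ 0} ((m₁+m₂+1)(m₂+m₃+1)(m₃+m₁+1))^{−(s+1)}. -/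
/-- The set of triples of positive integers satisfying condition (∗∗). -/
def starStarSet : Set (ℕ × ℕ × ℕ) :=
  {n | 1 ≤ n.1 ∧ 1 ≤ n.2.1 ∧ 1 ≤ n.2.2 ∧
       n.2.2 < n.1 + n.2.1 ∧ n.1 < n.2.1 + n.2.2 ∧ n.2.1 < n.2.2 + n.1 ∧
       Odd (n.1 + n.2.1 + n.2.2)}

/-- The parametrization `(m₁, m₂, m₃) ↦ (m₁ + m₂ + 1, m₂ + m₃ + 1, m₃ + m₁ + 1)` of the triples
satisfying (∗∗) by triples of natural numbers. -/
def starStarEquiv : ℕ × ℕ × ℕ ≃ starStarSet where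
  toFun m := ⟨(m.1 + m.2.1 + 1, m.2.1 + m.2.2 + 1, m.2.2 + m.1 + 1), by
    refine ⟨?_, ?_, ?_, ?_, ?_, ?_, m.1 + m.2.1 + m.2.2 + 1, ?_⟩ <;> dsimp only <;> omega⟩
  invFun n := ((n.1.2.2 + n.1.1 - n.1.2.1) / 2, (n.1.1 + n.1.2.1 - n.1.2.2) / 2,
    (n.1.2.1 + n.1.2.2 - n.1.1) / 2)
  left_inv m := by
    ext <;> dsimp only <;> omega
  right_inv := by
    rintro ⟨⟨a, b, c⟩, ha, hb, hc, h₁, h₂, h₃, k, hk⟩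
    dsimp only at ha hb hc h₁ h₂ h₃ hk
    ext <;> dsimp only <;> omega

theorem summable_norm_natCast_mul_mul_cpow_neg {p : ℂ} (hp : 1 < p.re) :
    Summable (fun n : ℕ × ℕ × ℕ => ‖((n.1 * n.2.1 * n.2.2 : ℕ) : ℂ) ^ (-p)‖) := by
  have h : Summable (fun n : ℕ => ‖(n : ℂ) ^ (-p)‖) := by
    simpa [Complex.cpow_neg] using (Complex.summable_one_div_nat_cpow.2 hp).norm
  refine (h.mul_of_nonneg (h.mul_of_nonneg h (fun _ => norm_nonneg _) (fun _ => norm_nonneg _))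
    (fun _ => norm_nonneg _) (fun _ => by positivity)).congr fun n => ?_
  rw [mul_assoc, Nat.cast_mul, Complex.natCast_mul_natCast_cpow, norm_mul, Nat.cast_mul,
    Complex.natCast_mul_natCast_cpow, norm_mul]

/-- For `Re(s) > 0`, the series `∑_{(n₁,n₂,n₃) with (∗∗)} (n₁n₂n₃)^{-(s+1)}`
converges absolutely and equals the absolutely convergent series
`∑_{m₁,m₂,m₃ ≥ 0} ((m₁+m₂+1)(m₂+m₃+1)(m₃+m₁+1))^{-(s+1)}`. -/
theorem star_star_series_eq (s : ℂ) (hs : 0 < s.re) :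
    Summable (fun n : starStarSet =>
      ‖((n.1.1 * n.1.2.1 * n.1.2.2 : ℕ) : ℂ) ^ (-(s + 1))‖) ∧
    Summable (fun m : ℕ × ℕ × ℕ =>
      ‖(((m.1 + m.2.1 + 1) * (m.2.1 + m.2.2 + 1) * (m.2.2 + m.1 + 1) : ℕ) : ℂ) ^ (-(s + 1))‖) ∧
    ∑' n : starStarSet, ((n.1.1 * n.1.2.1 * n.1.2.2 : ℕ) : ℂ) ^ (-(s + 1))
      = ∑' m : ℕ × ℕ × ℕ,
          (((m.1 + m.2.1 + 1) * (m.2.1 + m.2.2 + 1) * (m.2.2 + m.1 + 1) : ℕ) : ℂ) ^ (-(s + 1)) := by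
  have h : Summable (fun n : starStarSet =>
      ‖((n.1.1 * n.1.2.1 * n.1.2.2 : ℕ) : ℂ) ^ (-(s + 1))‖) :=
    (summable_norm_natCast_mul_mul_cpow_neg (p := s + 1) (by simpa using hs)).subtype starStarSet
  exact ⟨h, (starStarEquiv.summable_iff.2 h :), (starStarEquiv.tsum_eq _).symm⟩
end

section
/- Let s be a complex number with Re(s) > 1 and for θ ∈ (0,π) set f_s(θ) := ∑_{n=1}^∞ (sin(nθ)/sin(θ)) · n^{−(s+1)}. Then the triple mean value (2/π) ∫₀^π f_s(θ)³ sin²(θ) dθ equals ∑_{m₁,m₂,m₃ ≥ 0} ((m₁+m₂+1)(m₂+m₃+1)(m₃+m₁+1))^{−(s+1)}. (This is the cubic moment ∫_{SU(2)} ζ_{SU(2)}(s,g)³ dg of the Witten L-function of SU(2), computed via the Weyl integration formula.) -/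
open Real

/-- The Witten L-function of SU(2) at the conjugacy class `[θ]`:
`f_s(θ) = ∑_{n≥1} (sin(nθ)/sin θ) n^{-(s+1)}`. -/
noncomputable def wittenL (s : ℂ) (θ : ℝ) : ℂ :=
  ∑' n : ℕ, ((Real.sin (((n : ℝ) + 1) * θ) / Real.sin θ : ℝ) : ℂ)
    * ((n : ℂ) + 1) ^ (-(s + 1))

/-- The character `sin((n+1)θ)/sin θ` of the `(n+1)`-dimensional irreducible representation
of SU(2). -/
noncomputable def su2Char (n : ℕ) (θ : ℝ) : ℝ :=
  Real.sin (((n : ℝ) + 1) * θ) / Real.sin θ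

lemma abs_sin_nat_succ_mul_le (n : ℕ) (θ : ℝ) :
    |Real.sin (((n : ℝ) + 1) * θ)| ≤ ((n : ℝ) + 1) * |Real.sin θ| := by
  induction n with
  | zero => simp
  | succ n ih =>
    have hsplit : (((n + 1 : ℕ) : ℝ) + 1) * θ = ((n : ℝ) + 1) * θ + θ := by push_cast; ring
    rw [hsplit, Real.sin_add]
    push_cast
    have h₁ : |Real.sin (((n : ℝ) + 1) * θ) * Real.cos θ| ≤ |Real.sin (((n : ℝ) + 1) * θ)| := by
      rw [abs_mul]
      exact mul_le_of_le_one_right (abs_nonneg _) (Real.abs_cos_le_one _)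
    have h₂ : |Real.cos (((n : ℝ) + 1) * θ) * Real.sin θ| ≤ |Real.sin θ| := by
      rw [abs_mul]
      exact mul_le_of_le_one_left (abs_nonneg _) (Real.abs_cos_le_one _)
    linarith [abs_add_le (Real.sin (((n : ℝ) + 1) * θ) * Real.cos θ)
      (Real.cos (((n : ℝ) + 1) * θ) * Real.sin θ)]

lemma su2Char_mul_sin (n : ℕ) (θ : ℝ) :
    su2Char n θ * Real.sin θ = Real.sin (((n : ℝ) + 1) * θ) := by
  unfold su2Char
  by_cases h : Real.sin θ = 0
  · have := abs_sin_nat_succ_mul_le n θ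
    rw [h, abs_zero, mul_zero] at this
    rw [h, mul_zero, abs_nonpos_iff.mp this]
  · exact div_mul_cancel₀ _ h

lemma abs_su2Char_le (n : ℕ) (θ : ℝ) : |su2Char n θ| ≤ (n : ℝ) + 1 := by
  unfold su2Char
  rw [abs_div]
  exact div_le_of_le_mul₀ (abs_nonneg _) (by positivity) (abs_sin_nat_succ_mul_le n θ)

lemma measurable_su2Char (n : ℕ) : Measurable (su2Char n) := by
  unfold su2Char
  fun_prop

lemma sum_two_mul_sin_mul_sin (A θ : ℝ) (n : ℕ) :
    ∑ k ∈ Finset.range n, 2 * Real.sin θ * Real.sin ((A - 2 * k) * θ)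
      = Real.cos ((A - 2 * n + 1) * θ) - Real.cos ((A + 1) * θ) := by
  induction n with
  | zero => simp
  | succ n ih =>
    have h₁ : (A - 2 * n + 1) * θ = (A - 2 * n) * θ + θ := by ring
    have h₂ : (A - 2 * ((n + 1 : ℕ) : ℝ) + 1) * θ = (A - 2 * n) * θ - θ := by push_cast; ring
    rw [Finset.sum_range_succ, ih, h₁, h₂, Real.cos_add, Real.cos_sub]
    ring

/-- The Clebsch–Gordan formula, multiplied through by `sin² θ`. -/
lemma sin_mul_sin_eq_sin_mul_sum (a b : ℕ) (θ : ℝ) :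
    Real.sin (((a : ℝ) + 1) * θ) * Real.sin (((b : ℝ) + 1) * θ)
      = Real.sin θ * ∑ k ∈ Finset.range (min a b + 1),
          Real.sin ((((a + b - 2 * k : ℕ) : ℝ) + 1) * θ) := by
  have hcast : ∀ k ∈ Finset.range (min a b + 1),
      Real.sin ((((a + b - 2 * k : ℕ) : ℝ) + 1) * θ)
        = Real.sin (((a : ℝ) + b + 1 - 2 * k) * θ) := by
    intro k hk
    have hk' : 2 * k ≤ a + b := by
      have := Finset.mem_range.mp hk
      omega
    congr 1
    push_cast [hk']
    ring
  have htel := sum_two_mul_sin_mul_sin ((a : ℝ) + b + 1) θ (min a b + 1)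
  rw [← Finset.mul_sum] at htel
  have hcos : Real.cos (((a : ℝ) + b + 1 - 2 * ((min a b + 1 : ℕ) : ℝ) + 1) * θ)
      = Real.cos (((a : ℝ) + 1) * θ - ((b : ℝ) + 1) * θ) := by
    rcases le_total a b with h | h
    · rw [min_eq_left h, ← Real.cos_neg]
      congr 1
      push_cast
      ring
    · rw [min_eq_right h]
      congr 1
      push_cast
      ring
  have hadd : ((a : ℝ) + b + 1 + 1) * θ = ((a : ℝ) + 1) * θ + ((b : ℝ) + 1) * θ := by ring
  rw [hcos, hadd, Real.cos_sub, Real.cos_add] at htel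
  rw [Finset.sum_congr rfl hcast]
  linarith

lemma integral_cos_int_mul (m : ℤ) :
    ∫ θ in (0 : ℝ)..π, Real.cos (m * θ) = if m = 0 then π else 0 := by
  split_ifs with h
  · simp [h]
  · have hm : (m : ℝ) ≠ 0 := by exact_mod_cast h
    rw [intervalIntegral.integral_comp_mul_left (fun x => Real.cos x) hm, integral_cos,
      Real.sin_int_mul_pi]
    simp

lemma integral_sin_mul_sin (p q : ℕ) :
    ∫ θ in (0 : ℝ)..π, Real.sin (((p : ℝ) + 1) * θ) * Real.sin (((q : ℝ) + 1) * θ)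
      = if p = q then π / 2 else 0 := by
  have hprod : ∀ θ : ℝ, Real.sin (((p : ℝ) + 1) * θ) * Real.sin (((q : ℝ) + 1) * θ)
      = (Real.cos (((p - q : ℤ) : ℝ) * θ) - Real.cos (((p + q + 2 : ℤ) : ℝ) * θ)) / 2 := by
    intro θ
    have h₁ : ((p - q : ℤ) : ℝ) * θ = ((p : ℝ) + 1) * θ - ((q : ℝ) + 1) * θ := by
      push_cast; ring
    have h₂ : ((p + q + 2 : ℤ) : ℝ) * θ = ((p : ℝ) + 1) * θ + ((q : ℝ) + 1) * θ := by
      push_cast; ring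
    rw [h₁, h₂, Real.cos_sub, Real.cos_add]
    ring
  have hint : ∀ m : ℤ, IntervalIntegrable (fun θ : ℝ => Real.cos (m * θ))
      MeasureTheory.volume 0 π := fun m =>
    (by fun_prop : Continuous fun θ : ℝ => Real.cos (m * θ)).intervalIntegrable _ _
  simp_rw [hprod]
  rw [intervalIntegral.integral_div, intervalIntegral.integral_sub (hint _) (hint _),
    integral_cos_int_mul, integral_cos_int_mul, if_neg (by omega : ¬ (p + q + 2 : ℤ) = 0)]
  by_cases h : p = q
  · simp [h]
  · rw [if_neg h, if_neg (by omega)]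
    simp

/-- The multiplicity of the trivial representation in a triple tensor product of irreducible
representations of SU(2). -/
lemma integral_su2Char_mul_mul (a b c : ℕ) :
    ∫ θ in (0 : ℝ)..π, su2Char a θ * su2Char b θ * su2Char c θ * Real.sin θ ^ 2
      = if ∃ k ≤ min a b, a + b = c + 2 * k then π / 2 else 0 := by
  have hpt : ∀ θ : ℝ, su2Char a θ * su2Char b θ * su2Char c θ * Real.sin θ ^ 2
      = ∑ k ∈ Finset.range (min a b + 1), Real.sin ((((a + b - 2 * k : ℕ) : ℝ) + 1) * θ)
          * Real.sin (((c : ℝ) + 1) * θ) := by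
    intro θ
    calc su2Char a θ * su2Char b θ * su2Char c θ * Real.sin θ ^ 2
        = (su2Char a θ * Real.sin θ) * (su2Char b θ * Real.sin θ) * su2Char c θ := by ring
      _ = _ := by
        rw [su2Char_mul_sin, su2Char_mul_sin, sin_mul_sin_eq_sin_mul_sum, ← Finset.sum_mul,
          ← su2Char_mul_sin c]
        ring
  simp_rw [hpt]
  rw [intervalIntegral.integral_finsetSum fun k _ => Continuous.intervalIntegrable
    (by fun_prop) _ _]
  simp_rw [integral_sin_mul_sin]
  split_ifs with h
  · obtain ⟨k, hk, hkc⟩ := h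
    rw [Finset.sum_eq_single_of_mem k (Finset.mem_range.mpr (by omega)), if_pos (by omega)]
    intro j hj hjk
    have := Finset.mem_range.mp hj
    exact if_neg (by omega)
  · refine Finset.sum_eq_zero fun k hk => if_neg fun hkc => h ⟨k, ?_, ?_⟩
    all_goals
      have := Finset.mem_range.mp hk
      omega

lemma summable_succ_mul_norm_cpow {s : ℂ} (hs : 1 < s.re) :
    Summable fun n : ℕ => ((n : ℝ) + 1) * ‖((n : ℂ) + 1) ^ (-(s + 1))‖ := by
  have hp : Summable fun n : ℕ => ((n + 1 : ℕ) : ℝ) ^ (-s.re) :=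
    (summable_nat_add_iff 1).mpr (Real.summable_nat_rpow.mpr (by linarith))
  refine hp.congr fun n => ?_
  have hnorm := Complex.norm_natCast_cpow_of_pos n.succ_pos (-(s + 1))
  have hpos : (0 : ℝ) < ((n + 1 : ℕ) : ℝ) := by positivity
  have hre : (-(s + 1)).re = -s.re - 1 := by simp; ring
  rw [Nat.succ_eq_add_one, hre, Real.rpow_sub_one hpos.ne'] at hnorm
  push_cast at hnorm hpos ⊢
  rw [hnorm]
  field_simp

lemma norm_su2Char_mul_le (n : ℕ) (θ : ℝ) (z : ℂ) :
    ‖(su2Char n θ : ℂ) * z‖ ≤ ((n : ℝ) + 1) * ‖z‖ := by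
  rw [norm_mul, Complex.norm_real, Real.norm_eq_abs]
  exact mul_le_mul_of_nonneg_right (abs_su2Char_le n θ) (norm_nonneg _)

lemma hasSum_cube_of_summable_norm {ι R : Type*} [NormedCommRing R] [CompleteSpace R]
    {f : ι → R} (hf : Summable fun i => ‖f i‖) :
    HasSum (fun z : ι × ι × ι => f z.1 * (f z.2.1 * f z.2.2)) ((∑' i, f i) ^ 3) := by
  have h₂ := Summable.mul_norm hf hf
  have h₃ := summable_mul_of_summable_norm hf h₂
  have heq : (∑' i, f i) ^ 3 = ∑' z : ι × ι × ι, f z.1 * (f z.2.1 * f z.2.2) := by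
    rw [← tsum_mul_tsum_of_summable_norm hf h₂, ← tsum_mul_tsum_of_summable_norm hf hf]
    ring
  rw [heq]
  exact h₃.hasSum

/-- Termwise integration of the cube of `wittenL`. -/
lemma hasSum_integral_wittenL_cube {s : ℂ} (hs : 1 < s.re) :
    HasSum (fun z : ℕ × ℕ × ℕ =>
        ((z.1 : ℂ) + 1) ^ (-(s + 1)) * (((z.2.1 : ℂ) + 1) ^ (-(s + 1))
          * ((z.2.2 : ℂ) + 1) ^ (-(s + 1)))
          * ((∫ θ in (0 : ℝ)..π, su2Char z.1 θ * su2Char z.2.1 θ * su2Char z.2.2 θ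
              * Real.sin θ ^ 2 : ℝ) : ℂ))
      (∫ θ in (0 : ℝ)..π, (wittenL s θ) ^ 3 * ((Real.sin θ : ℂ)) ^ 2) := by
  set c : ℕ → ℂ := fun n => ((n : ℂ) + 1) ^ (-(s + 1))
  have hB : Summable fun n : ℕ => ((n : ℝ) + 1) * ‖c n‖ := summable_succ_mul_norm_cpow hs
  have hB₂ := Summable.mul_of_nonneg hB hB (fun n => by positivity) (fun n => by positivity)
  have hB₃ := Summable.mul_of_nonneg hB hB₂ (fun n => by positivity) (fun n => by positivity)
  have hterm : ∀ θ, Summable fun n => ‖(su2Char n θ : ℂ) * c n‖ := fun θ =>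
    hB.of_nonneg_of_le (fun _ => norm_nonneg _) fun n => norm_su2Char_mul_le n θ _
  have key := intervalIntegral.hasSum_integral_of_dominated_convergence
    (μ := MeasureTheory.volume) (a := 0) (b := π)
    (F := fun (z : ℕ × ℕ × ℕ) θ => (su2Char z.1 θ * c z.1) * ((su2Char z.2.1 θ * c z.2.1)
      * (su2Char z.2.2 θ * c z.2.2)) * (Real.sin θ : ℂ) ^ 2)
    (f := fun θ => (wittenL s θ) ^ 3 * ((Real.sin θ : ℂ)) ^ 2)
    (fun z _ => (((z.1 : ℝ) + 1) * ‖c z.1‖) * ((((z.2.1 : ℝ) + 1) * ‖c z.2.1‖)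
      * (((z.2.2 : ℝ) + 1) * ‖c z.2.2‖)))
    ?_ ?_ ?_ ?_ ?_
  · refine (congrArg (HasSum · _) (funext fun z => ?_)).mpr key
    rw [← intervalIntegral.integral_ofReal, ← intervalIntegral.integral_const_mul]
    congr 1 with θ
    push_cast
    ring
  · intro z
    have h₁ := measurable_su2Char z.1
    have h₂ := measurable_su2Char z.2.1
    have h₃ := measurable_su2Char z.2.2
    exact Measurable.aestronglyMeasurable (by fun_prop)
  · refine fun z => Filter.Eventually.of_forall fun θ _ => ?_
    have hsin : ‖(Real.sin θ : ℂ) ^ 2‖ ≤ 1 := by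
      rw [norm_pow, Complex.norm_real, Real.norm_eq_abs]
      exact pow_le_one₀ (abs_nonneg _) (Real.abs_sin_le_one θ)
    rw [norm_mul]
    refine (mul_le_of_le_one_right (norm_nonneg _) hsin).trans ?_
    have hle := fun n => norm_su2Char_mul_le n θ (c n)
    exact norm_mul_le_of_le (hle _) (norm_mul_le_of_le (hle _) (hle _))
  · exact Filter.Eventually.of_forall fun θ _ => hB₃
  · exact intervalIntegrable_const
  · exact Filter.Eventually.of_forall fun θ _ =>
      (hasSum_cube_of_summable_norm (hterm θ)).mul_right _

/-- The cubic moment of the Witten L-function of SU(2): for `Re(s) > 1`,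
`(2/π) ∫₀^π f_s(θ)³ sin²θ dθ = ∑_{m₁,m₂,m₃ ≥ 0} ((m₁+m₂+1)(m₂+m₃+1)(m₃+m₁+1))^{-(s+1)}`. -/
theorem cubic_moment (s : ℂ) (hs : 1 < s.re) :
    (2 / (π : ℂ)) * ∫ θ in (0:ℝ)..π, (wittenL s θ) ^ 3 * ((Real.sin θ : ℂ)) ^ 2
      = ∑' m : ℕ × ℕ × ℕ,
          (((m.1 + m.2.1 + 1) * (m.2.1 + m.2.2 + 1) * (m.2.2 + m.1 + 1) : ℕ) : ℂ) ^ (-(s + 1)) := by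
  rw [← (hasSum_integral_wittenL_cube hs).tsum_eq, ← tsum_mul_left]
  have hinj : Function.Injective fun m : ℕ × ℕ × ℕ =>
      (m.1 + m.2.1, m.2.1 + m.2.2, m.2.2 + m.1) := by
    rintro ⟨m₁, m₂, m₃⟩ ⟨n₁, n₂, n₃⟩ h
    simp only [Prod.mk.injEq] at h ⊢
    omega
  rw [← hinj.tsum_eq]
  · refine tsum_congr fun m => ?_
    have hex : ∃ k ≤ min (m.1 + m.2.1) (m.2.1 + m.2.2),
        m.1 + m.2.1 + (m.2.1 + m.2.2) = m.2.2 + m.1 + 2 * k := ⟨m.2.1, by omega, by omega⟩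
    have hπ : (π : ℂ) ≠ 0 := by exact_mod_cast Real.pi_ne_zero
    simp only [integral_su2Char_mul_mul, if_pos hex]
    rw [Nat.cast_mul, Complex.natCast_mul_natCast_cpow, Nat.cast_mul,
      Complex.natCast_mul_natCast_cpow]
    push_cast
    field_simp
  · rintro ⟨a, b, c⟩ h
    by_cases hex : ∃ k ≤ min a b, a + b = c + 2 * k
    · obtain ⟨k, hk, hkc⟩ := hex
      refine ⟨(a - k, k, b - k), ?_⟩
      simp only [Prod.mk.injEq]
      omega
    · simp [integral_su2Char_mul_mul, if_neg hex] at h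
end

section
/- For every complex number s with Re(s) > −2, the series ∑_{n=1}^∞ n^{−(s+3)} · ((2/π) ∫₀^π sin(nθ)³/sin(θ) dθ) converges absolutely and equals (1 − 2^{−(s+3)})·ζ(s+3). (This is the triple convolution mean value ∫_{SU(2)} ζ_{SU(2)}(s,(g,g,g)) dg = (1 − 2^{−s−3})ζ(s+3).) -/
open Real

/-- `sin ((k + 2) θ) - sin (k θ) = 2 cos ((k + 1) θ) sin θ`, divided by `sin θ`. -/
lemma sin_add_two_mul_div_sin {θ : ℝ} (h : Real.sin θ ≠ 0) (a : ℝ) :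
    Real.sin ((a + 2) * θ) / Real.sin θ
      = Real.sin (a * θ) / Real.sin θ + 2 * Real.cos ((a + 1) * θ) := by
  have h₁ : (a + 2) * θ = (a + 1) * θ + θ := by ring
  have h₂ : a * θ = (a + 1) * θ - θ := by ring
  rw [h₁, h₂, Real.sin_add, Real.sin_sub]
  field_simp
  ring

lemma sin_ne_zero_ae_uIoc_zero_pi :
    ∀ᵐ θ : ℝ, θ ∈ Set.uIoc 0 π → Real.sin θ ≠ 0 := by
  filter_upwards [MeasureTheory.Measure.ae_ne MeasureTheory.volume π] with θ hθ hmem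
  rw [Set.uIoc_of_le pi_pos.le] at hmem
  exact (Real.sin_pos_of_pos_of_lt_pi hmem.1 (lt_of_le_of_ne hmem.2 hθ)).ne'

lemma integral_two_mul_cos_succ_mul (k : ℕ) :
    ∫ θ in (0:ℝ)..π, 2 * Real.cos (((k : ℝ) + 1) * θ) = 0 := by
  have hk : (k : ℝ) + 1 ≠ 0 := by positivity
  have hsin : Real.sin (((k : ℝ) + 1) * π) = 0 := by
    exact_mod_cast Real.sin_nat_mul_pi (k + 1)
  rw [intervalIntegral.integral_const_mul,
    intervalIntegral.integral_comp_mul_left (fun x => Real.cos x) hk]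
  simp [hsin]

/-- The Dirichlet-type integral of the character `sin (k θ) / sin θ` over `[0, π]`. -/
lemma intervalIntegrable_and_integral_sin_mul_div_sin (k : ℕ) :
    IntervalIntegrable (fun θ : ℝ => Real.sin (k * θ) / Real.sin θ) MeasureTheory.volume 0 π ∧
    ∫ θ in (0:ℝ)..π, Real.sin (k * θ) / Real.sin θ = if Odd k then π else 0 := by
  induction k using Nat.twoStepInduction with
  | zero => simp
  | one =>
    have hae : ∀ᵐ θ : ℝ, θ ∈ Set.uIoc 0 π →
        (1 : ℝ) = Real.sin ((1 : ℕ) * θ) / Real.sin θ := by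
      filter_upwards [sin_ne_zero_ae_uIoc_zero_pi] with θ h hθ
      simp [h hθ]
    refine ⟨intervalIntegrable_const.congr_ae
      ((MeasureTheory.ae_restrict_iff' measurableSet_uIoc).mpr hae), ?_⟩
    rw [← intervalIntegral.integral_congr_ae hae]
    simp
  | more k ih _ =>
    have hae : ∀ᵐ θ : ℝ, θ ∈ Set.uIoc 0 π →
        Real.sin (k * θ) / Real.sin θ + 2 * Real.cos (((k : ℝ) + 1) * θ)
          = Real.sin ((k + 2 : ℕ) * θ) / Real.sin θ := by
      filter_upwards [sin_ne_zero_ae_uIoc_zero_pi] with θ h hθ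
      push_cast
      exact (sin_add_two_mul_div_sin (h hθ) k).symm
    have hcos : IntervalIntegrable (fun θ : ℝ => 2 * Real.cos (((k : ℝ) + 1) * θ))
        MeasureTheory.volume 0 π :=
      Continuous.intervalIntegrable (by fun_prop) _ _
    refine ⟨(ih.1.add hcos).congr_ae
      ((MeasureTheory.ae_restrict_iff' measurableSet_uIoc).mpr hae), ?_⟩
    rw [← intervalIntegral.integral_congr_ae hae,
      intervalIntegral.integral_add ih.1 hcos, ih.2, integral_two_mul_cos_succ_mul]
    simp [Nat.odd_add]

/-- The multiplicity of the trivial representation in the triple tensor power of the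
`k`-dimensional irreducible representation of `SU(2)`, as a Weyl integral. -/
lemma two_div_pi_mul_integral_sin_mul_cube_div_sin (k : ℕ) :
    (2 / π) * ∫ θ in (0:ℝ)..π, Real.sin (k * θ) ^ 3 / Real.sin θ = if Odd k then 1 else 0 := by
  obtain ⟨hi₁, hv₁⟩ := intervalIntegrable_and_integral_sin_mul_div_sin k
  obtain ⟨hi₃, hv₃⟩ := intervalIntegrable_and_integral_sin_mul_div_sin (3 * k)
  have hcube (θ : ℝ) : Real.sin (k * θ) ^ 3 / Real.sin θ
      = 3 / 4 * (Real.sin (k * θ) / Real.sin θ)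
        - 1 / 4 * (Real.sin ((3 * k : ℕ) * θ) / Real.sin θ) := by
    push_cast
    rw [mul_assoc, Real.sin_three_mul]
    ring
  have hodd : Odd (3 * k) ↔ Odd k := by simp [Nat.odd_mul, show Odd 3 by decide]
  simp_rw [hcube]
  rw [intervalIntegral.integral_sub (hi₁.const_mul _) (hi₃.const_mul _),
    intervalIntegral.integral_const_mul, intervalIntegral.integral_const_mul, hv₁, hv₃]
  simp only [hodd]
  split_ifs
  · field_simp
    norm_num
  · simp

lemma hasSum_nat_add_one_cpow_neg {w : ℂ} (hw : 1 < w.re) :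
    HasSum (fun n : ℕ => ((n : ℂ) + 1) ^ (-w)) (riemannZeta w) := by
  have hsum : Summable (fun n : ℕ => ((n : ℂ) + 1) ^ (-w)) := by
    simpa [Complex.cpow_neg] using
      (summable_nat_add_iff 1).mpr (Complex.summable_one_div_nat_cpow.mpr hw)
  convert hsum.hasSum using 1
  rw [zeta_eq_tsum_one_div_nat_add_one_cpow hw]
  simp [Complex.cpow_neg]

/-- The Dirichlet series over odd integers is the zeta function without its Euler factor at `2`. -/
lemma hasSum_odd_nat_add_one_cpow_neg {w : ℂ} (hw : 1 < w.re) :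
    HasSum (fun n : ℕ => ((n : ℂ) + 1) ^ (-w) * (if Odd (n + 1) then 1 else 0))
      ((1 - (2 : ℂ) ^ (-w)) * riemannZeta w) := by
  have hall := hasSum_nat_add_one_cpow_neg hw
  have heven : HasSum (fun n : ℕ => ((n : ℂ) + 1) ^ (-w) * (if Odd (n + 1) then 0 else 1))
      ((2 : ℂ) ^ (-w) * riemannZeta w) := by
    have hinj : Function.Injective (fun k : ℕ => 2 * k + 1) := fun a b h => by grind
    rw [← hinj.hasSum_iff]
    · refine (congrArg (HasSum · _) (funext fun k => ?_)).mpr (hall.mul_left ((2 : ℂ) ^ (-w)))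
      have hodd : ¬ Odd (2 * k + 1 + 1) := by grind
      have hmul := Complex.natCast_mul_natCast_cpow 2 (k + 1) (-w)
      push_cast at hmul
      simp only [Function.comp_apply, hodd, if_false, mul_one, ← hmul]
      push_cast
      ring_nf
    · intro n hn
      have hodd : Odd (n + 1) := by
        by_contra h
        exact hn ⟨n / 2, by grind⟩
      simp [hodd]
  rw [sub_mul, one_mul]
  refine (congrArg (HasSum · _) (funext fun n => ?_)).mpr (hall.sub heven)
  split_ifs <;> simp

/-- The triple convolution mean value of the Witten L-function of SU(2):
for `Re(s) > −2`, the series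
`∑_{n≥1} n^{-(s+3)} · (2/π)∫₀^π sin(nθ)³/sinθ dθ`
converges absolutely and equals `(1 − 2^{-(s+3)}) ζ(s+3)`. -/
theorem triple_convolution_mean_value (s : ℂ) (hs : -2 < s.re) :
    Summable (fun n : ℕ => ‖((n : ℂ) + 1) ^ (-(s + 3))
      * (((2 / π) * ∫ θ in (0:ℝ)..π,
          (Real.sin (((n : ℝ) + 1) * θ)) ^ 3 / Real.sin θ : ℝ) : ℂ)‖) ∧
    ∑' n : ℕ, ((n : ℂ) + 1) ^ (-(s + 3))
        * (((2 / π) * ∫ θ in (0:ℝ)..π,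
            (Real.sin (((n : ℝ) + 1) * θ)) ^ 3 / Real.sin θ : ℝ) : ℂ)
      = (1 - (2 : ℂ) ^ (-(s + 3))) * riemannZeta (s + 3) := by
  have hterm (n : ℕ) : ((2 / π) * ∫ θ in (0:ℝ)..π,
      (Real.sin (((n : ℝ) + 1) * θ)) ^ 3 / Real.sin θ) = if Odd (n + 1) then 1 else 0 := by
    exact_mod_cast two_div_pi_mul_integral_sin_mul_cube_div_sin (n + 1)
  have hw : 1 < (s + 3).re := by
    simp only [Complex.add_re, Complex.re_ofNat]
    linarith
  have hsum := hasSum_odd_nat_add_one_cpow_neg hw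
  simp only [hterm, apply_ite Complex.ofReal, Complex.ofReal_one, Complex.ofReal_zero]
  exact ⟨hsum.summable.norm, hsum.tsum_eq⟩
end

section
/- For every integer n ≥ 1, the integral (2/π) ∫₀^π sin(nθ)⁴/sin(θ)² dθ equals n. -/
/-- The Dirichlet kernel of order `k` at `2θ`, as a cosine polynomial. -/
noncomputable def dirichletCos (k : ℕ) (θ : ℝ) : ℝ :=
  1 + 2 * ∑ j ∈ Finset.range k, Real.cos (2 * ((j : ℝ) + 1) * θ)

lemma continuous_dirichletCos (k : ℕ) : Continuous (dirichletCos k) := by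
  unfold dirichletCos
  fun_prop

lemma dirichletCos_mul_sin (k : ℕ) (θ : ℝ) :
    dirichletCos k θ * Real.sin θ = Real.sin ((2 * (k : ℝ) + 1) * θ) := by
  induction k with
  | zero => simp [dirichletCos]
  | succ k ih =>
    have hstep : dirichletCos (k + 1) θ
        = dirichletCos k θ + 2 * Real.cos (2 * ((k : ℝ) + 1) * θ) := by
      simp only [dirichletCos, Finset.sum_range_succ]
      ring
    rw [hstep, add_mul, ih]
    have hlow : (2 * (k : ℝ) + 1) * θ = 2 * ((k : ℝ) + 1) * θ - θ := by ring
    have hhigh : (2 * ((k + 1 : ℕ) : ℝ) + 1) * θ = 2 * ((k : ℝ) + 1) * θ + θ := by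
      push_cast
      ring
    rw [hlow, hhigh, Real.sin_sub, Real.sin_add]
    ring

lemma sum_dirichletCos_mul_sin_sq (m : ℕ) (θ : ℝ) :
    (∑ k ∈ Finset.range m, dirichletCos k θ) * Real.sin θ ^ 2
      = Real.sin ((m : ℝ) * θ) ^ 2 := by
  induction m with
  | zero => simp
  | succ m ih =>
    have hodd : (2 * (m : ℝ) + 1) * θ = m * θ + (m * θ + θ) := by ring
    have hsucc : ((m + 1 : ℕ) : ℝ) * θ = m * θ + θ := by
      push_cast
      ring
    have hsin := dirichletCos_mul_sin m θ
    rw [hodd, Real.sin_add, Real.sin_add, Real.cos_add] at hsin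
    rw [Finset.sum_range_succ, add_mul, ih, hsucc, Real.sin_add, pow_two (Real.sin θ),
      ← mul_assoc, hsin]
    linear_combination -Real.sin (m * θ) ^ 2 * Real.sin_sq_add_cos_sq θ

lemma integral_dirichletCos (k : ℕ) : ∫ θ in (0 : ℝ)..Real.pi, dirichletCos k θ = Real.pi := by
  have hcos (j : ℕ) : ∫ θ in (0 : ℝ)..Real.pi, Real.cos (2 * ((j : ℝ) + 1) * θ) = 0 := by
    have hne : 2 * ((j : ℝ) + 1) ≠ 0 := by positivity
    have hsin : Real.sin (2 * ((j : ℝ) + 1) * Real.pi) = 0 := by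
      simpa using Real.sin_nat_mul_pi (2 * (j + 1))
    rw [intervalIntegral.integral_comp_mul_left _ hne, integral_cos, hsin]
    simp
  unfold dirichletCos
  rw [intervalIntegral.integral_add (by simp)
      (Continuous.intervalIntegrable (by fun_prop) _ _),
    intervalIntegral.integral_const_mul,
    intervalIntegral.integral_finsetSum
      fun _ _ => Continuous.intervalIntegrable (by fun_prop) _ _]
  simp [hcos]

lemma continuous_sum_dirichletCos (m : ℕ) :
    Continuous fun θ => ∑ k ∈ Finset.range m, dirichletCos k θ :=
  continuous_finsetSum _ fun k _ => continuous_dirichletCos k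

lemma integral_sum_dirichletCos (m : ℕ) :
    ∫ θ in (0 : ℝ)..Real.pi, ∑ k ∈ Finset.range m, dirichletCos k θ = m * Real.pi := by
  rw [intervalIntegral.integral_finsetSum
    fun k _ => (continuous_dirichletCos k).intervalIntegrable _ _]
  simp [integral_dirichletCos]

lemma sin_pow_four_div_sin_sq (n : ℕ) {θ : ℝ} (hθ : Real.sin θ ≠ 0) :
    Real.sin ((n : ℝ) * θ) ^ 4 / Real.sin θ ^ 2
      = ∑ k ∈ Finset.range n, dirichletCos k θ
        - 1 / 4 * ∑ k ∈ Finset.range (2 * n), dirichletCos k θ := by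
  have hdouble : ((2 * n : ℕ) : ℝ) * θ = 2 * (n * θ) := by
    push_cast
    ring
  rw [div_eq_iff (pow_ne_zero 2 hθ), sub_mul, mul_assoc, sum_dirichletCos_mul_sin_sq,
    sum_dirichletCos_mul_sin_sq, hdouble, Real.sin_two_mul]
  linear_combination Real.sin (n * θ) ^ 2 * Real.sin_sq_add_cos_sq (n * θ)

open Real

/-- For `n ≥ 1`, `(2/π) ∫₀^π sin(nθ)⁴/sin(θ)² dθ = n`. -/
theorem sin_fourth_integral (n : ℕ) (hn : 1 ≤ n) :
    (2 / π) * ∫ θ in (0:ℝ)..π, (Real.sin ((n : ℝ) * θ)) ^ 4 / (Real.sin θ) ^ 2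
      = (n : ℝ) := by
  have hcongr : ∫ θ in (0:ℝ)..π, (Real.sin ((n : ℝ) * θ)) ^ 4 / (Real.sin θ) ^ 2
      = ∫ θ in (0:ℝ)..π, (∑ k ∈ Finset.range n, dirichletCos k θ
        - 1 / 4 * ∑ k ∈ Finset.range (2 * n), dirichletCos k θ) := by
    refine intervalIntegral.integral_congr_Ioo_of_le pi_pos.le fun θ hθ => ?_
    exact sin_pow_four_div_sin_sq n (sin_pos_of_mem_Ioo hθ).ne'
  rw [hcongr, intervalIntegral.integral_sub
      ((continuous_sum_dirichletCos n).intervalIntegrable _ _)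
      (((continuous_sum_dirichletCos (2 * n)).const_mul _).intervalIntegrable _ _),
    intervalIntegral.integral_const_mul, integral_sum_dirichletCos, integral_sum_dirichletCos]
  have hpi : π ≠ 0 := pi_ne_zero
  push_cast
  field_simp
  ring
end

section
/- For every complex number s with Re(s) > −2, the series ∑_{n=1}^∞ n^{−(s+4)} · ((2/π) ∫₀^π sin(nθ)⁴/sin(θ)² dθ) converges absolutely and equals ζ(s+3). (This is the quadruple convolution mean value ∫_{SU(2)} ζ_{SU(2)}(s,(g,g,g,g)) dg = ζ(s+3).) -/
open Real

/-- The Dirichlet kernel `1 + 2 ∑_{k=1}^{j} cos (2kθ)`. -/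
noncomputable def dirichletKernel (j : ℕ) (θ : ℝ) : ℝ :=
  1 + 2 * ∑ k ∈ Finset.range j, Real.cos (2 * ((k : ℝ) + 1) * θ)

/-- The (unnormalized) Fejér kernel, the sum of the first `n` Dirichlet kernels. -/
noncomputable def fejerKernel (n : ℕ) (θ : ℝ) : ℝ :=
  ∑ j ∈ Finset.range n, dirichletKernel j θ

theorem continuous_dirichletKernel (j : ℕ) : Continuous (dirichletKernel j) := by
  unfold dirichletKernel
  fun_prop

theorem continuous_fejerKernel (n : ℕ) : Continuous (fejerKernel n) :=
  continuous_finsetSum _ fun j _ => continuous_dirichletKernel j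

theorem sin_mul_dirichletKernel (j : ℕ) (θ : ℝ) :
    Real.sin θ * dirichletKernel j θ = Real.sin ((2 * j + 1) * θ) := by
  induction j with
  | zero => simp [dirichletKernel]
  | succ j ih =>
    have step : dirichletKernel (j + 1) θ
        = dirichletKernel j θ + 2 * Real.cos (2 * ((j : ℝ) + 1) * θ) := by
      simp only [dirichletKernel, Finset.sum_range_succ]
      ring
    have h₁ : (2 * ((j + 1 : ℕ) : ℝ) + 1) * θ = 2 * ((j : ℝ) + 1) * θ + θ := by
      push_cast
      ring
    have h₂ : (2 * (j : ℝ) + 1) * θ = 2 * ((j : ℝ) + 1) * θ - θ := by ring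
    rw [step, mul_add, ih, h₁, h₂, Real.sin_add, Real.sin_sub]
    ring

theorem sin_sq_mul_fejerKernel (n : ℕ) (θ : ℝ) :
    Real.sin θ ^ 2 * fejerKernel n θ = Real.sin (n * θ) ^ 2 := by
  induction n with
  | zero => simp [fejerKernel]
  | succ n ih =>
    have step : fejerKernel (n + 1) θ = fejerKernel n θ + dirichletKernel n θ := by
      simp only [fejerKernel, Finset.sum_range_succ]
    have h₁ : ((n + 1 : ℕ) : ℝ) * θ = n * θ + θ := by
      push_cast
      ring
    have h₂ : (2 * (n : ℝ) + 1) * θ = 2 * (n * θ) + θ := by ring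
    rw [step, mul_add, ih, sq (Real.sin θ), mul_assoc, sin_mul_dirichletKernel, h₁, h₂,
      Real.sin_add, Real.sin_add, Real.sin_two_mul, Real.cos_two_mul]
    linear_combination Real.sin θ ^ 2 * Real.sin_sq_add_cos_sq (n * θ)
      - Real.sin (n * θ) ^ 2 * Real.sin_sq_add_cos_sq θ

theorem integral_dirichletKernel (j : ℕ) : ∫ θ in (0 : ℝ)..π, dirichletKernel j θ = π := by
  have hcos (k : ℕ) : ∫ θ in (0 : ℝ)..π, Real.cos (2 * ((k : ℝ) + 1) * θ) = 0 := by
    have hk : 2 * ((k : ℝ) + 1) ≠ 0 := by positivity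
    have hsin : Real.sin (2 * ((k : ℝ) + 1) * π) = 0 := by
      simpa using Real.sin_nat_mul_pi (2 * (k + 1))
    simp [intervalIntegral.integral_comp_mul_left _ hk, hsin]
  simp only [dirichletKernel]
  rw [intervalIntegral.integral_add (by simp)
      (Continuous.intervalIntegrable (by fun_prop) _ _),
    intervalIntegral.integral_const_mul, intervalIntegral.integral_finsetSum
      fun k _ => Continuous.intervalIntegrable (by fun_prop) _ _]
  simp [hcos]

theorem integral_fejerKernel (n : ℕ) : ∫ θ in (0 : ℝ)..π, fejerKernel n θ = n * π := by
  simp only [fejerKernel]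
  rw [intervalIntegral.integral_finsetSum
    fun j _ => (continuous_dirichletKernel j).intervalIntegrable _ _]
  simp [integral_dirichletKernel]

theorem integral_sin_nat_mul_pow_four_div_sin_sq (n : ℕ) :
    ∫ θ in (0 : ℝ)..π, Real.sin (n * θ) ^ 4 / Real.sin θ ^ 2 = n * π / 2 := by
  have hcongr : ∫ θ in (0 : ℝ)..π, Real.sin (n * θ) ^ 4 / Real.sin θ ^ 2
      = ∫ θ in (0 : ℝ)..π, (fejerKernel n θ - 1 / 4 * fejerKernel (2 * n) θ) := by
    refine intervalIntegral.integral_congr_ae ?_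
    filter_upwards [MeasureTheory.Measure.ae_ne MeasureTheory.volume π] with θ hne hθ
    rw [Set.uIoc_of_le Real.pi_pos.le] at hθ
    have hsin : Real.sin θ ≠ 0 :=
      (Real.sin_pos_of_pos_of_lt_pi hθ.1 (lt_of_le_of_ne hθ.2 hne)).ne'
    have hdouble := sin_sq_mul_fejerKernel (2 * n) θ
    rw [show ((2 * n : ℕ) : ℝ) * θ = 2 * (n * θ) by push_cast; ring, Real.sin_two_mul] at hdouble
    rw [div_eq_iff (pow_ne_zero 2 hsin)]
    linear_combination (-1 : ℝ) * sin_sq_mul_fejerKernel n θ + 1 / 4 * hdouble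
      + Real.sin (n * θ) ^ 2 * Real.sin_sq_add_cos_sq (n * θ)
  rw [hcongr, intervalIntegral.integral_sub ((continuous_fejerKernel n).intervalIntegrable _ _)
      (((continuous_fejerKernel (2 * n)).const_mul _).intervalIntegrable _ _),
    intervalIntegral.integral_const_mul, integral_fejerKernel, integral_fejerKernel]
  push_cast
  ring

/-- The quadruple convolution mean value of the Witten L-function of SU(2):
for `Re(s) > −2`, the series
`∑_{n≥1} n^{-(s+4)} · (2/π)∫₀^π sin(nθ)⁴/sin²θ dθ`
converges absolutely and equals `ζ(s+3)`. -/
theorem quadruple_convolution_mean_value (s : ℂ) (hs : -2 < s.re) :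
    Summable (fun n : ℕ => ‖((n : ℂ) + 1) ^ (-(s + 4))
      * (((2 / π) * ∫ θ in (0:ℝ)..π,
          (Real.sin (((n : ℝ) + 1) * θ)) ^ 4 / (Real.sin θ) ^ 2 : ℝ) : ℂ)‖) ∧
    ∑' n : ℕ, ((n : ℂ) + 1) ^ (-(s + 4))
        * (((2 / π) * ∫ θ in (0:ℝ)..π,
            (Real.sin (((n : ℝ) + 1) * θ)) ^ 4 / (Real.sin θ) ^ 2 : ℝ) : ℂ)
      = riemannZeta (s + 3) := by
  have hre : 1 < (s + 3).re := by
    simp only [Complex.add_re, Complex.re_ofNat]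
    linarith
  have hterm (n : ℕ) : ((n : ℂ) + 1) ^ (-(s + 4))
      * (((2 / π) * ∫ θ in (0:ℝ)..π,
          (Real.sin (((n : ℝ) + 1) * θ)) ^ 4 / (Real.sin θ) ^ 2 : ℝ) : ℂ)
      = 1 / ((n : ℂ) + 1) ^ (s + 3) := by
    have hn : (n : ℂ) + 1 ≠ 0 := Nat.cast_add_one_ne_zero n
    have hint := integral_sin_nat_mul_pow_four_div_sin_sq (n + 1)
    push_cast at hint
    have hmean : 2 / π * (((n : ℝ) + 1) * π / 2) = (n : ℝ) + 1 := by
      field_simp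
    rw [hint, hmean, one_div, ← Complex.cpow_neg, show -(s + 3) = -(s + 4) + 1 by ring,
      Complex.cpow_add _ _ hn, Complex.cpow_one]
    push_cast
    rfl
  simp only [hterm]
  refine ⟨?_, (zeta_eq_tsum_one_div_nat_add_one_cpow hre).symm⟩
  have hsum := (summable_nat_add_iff 1).mpr (Complex.summable_one_div_nat_cpow.mpr hre)
  simpa using hsum.norm
end
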